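/- For every n ≥ 2, the collection 𝒮ⁿ = {𝒮ⁿ_i : i < n}, where 𝒮ⁿ_i is the family of all i-chains of the n-adic tree n^{<ω}, is a strong n-gap: the families 𝒮ⁿ_i are infinitely hereditary and pairwise orthogonal, any choice of x_i ∈ 𝒮ⁿ_i (i < n) has finite intersection, and the families {𝒮ⁿ_i : i < n} are not countably separated. -/

import Mathlib

open Set

/-- `a ⊆* b`: all but finitely many elements of `a` belong to `b`. -/
def AlmostSub {N : Type*} (a b : Set N) : Prop := (a \ b).Finite

/-- Two families of sets are orthogonal if any two members intersect in a finite set. -/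
def OrthFam {N : Type*} (I J : Set (Set N)) : Prop := ∀ x ∈ I, ∀ y ∈ J, (x ∩ y).Finite

/-- The families `Γ i` are separated if there are sets `a i` with `x ⊆* a i` for
every `x ∈ Γ i` and `⋂ i, a i` finite. -/
def SepFam {N ι : Type*} (Γ : ι → Set (Set N)) : Prop :=
  ∃ a : ι → Set N, (∀ i, ∀ x ∈ Γ i, (x \ a i).Finite) ∧ (⋂ i, a i).Finite

/-- The families `Γ i` are countably separated. -/
def CSepFam {N ι : Type*} (Γ : ι → Set (Set N)) : Prop :=
  ∃ C : Set (Set N), C.Countable ∧ ∀ x : ι → Set N, (∀ i, x i ∈ Γ i) →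
    ∃ c : ι → Set N, (∀ i, c i ∈ C) ∧ (∀ i, x i ⊆ c i) ∧ (⋂ i, c i) = ∅

/-- A family is infinitely hereditary if every infinite subset of a member is a member. -/
def HerFam {N : Type*} (I : Set (Set N)) : Prop := ∀ x ∈ I, ∀ y ⊆ x, y.Infinite → y ∈ I

/-- `Γ` is an `n∗`-gap. -/
def NStarGap {N ι : Type*} (Γ : ι → Set (Set N)) : Prop :=
  (∀ x : ι → Set N, (∀ i, x i ∈ Γ i) → (⋂ i, x i).Finite) ∧
  ¬ SepFam Γ ∧ (∀ i, HerFam (Γ i))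

/-- `Γ` is an `n`-gap: an `n∗`-gap with pairwise orthogonal families. -/
def NGap {N ι : Type*} (Γ : ι → Set (Set N)) : Prop :=
  NStarGap Γ ∧ ∀ i j, i ≠ j → OrthFam (Γ i) (Γ j)

/-- The orthogonal of a family of sets. -/
def orthFamC {N : Type*} (I : Set (Set N)) : Set (Set N) := {y | ∀ x ∈ I, (x ∩ y).Finite}

/-- A family of subsets of `N`, viewed as a subset of the Cantor space `2^N`,
is analytic. -/
def AnalyticFam {N : Type*} (Γ : Set (Set N)) : Prop :=
  MeasureTheory.AnalyticSet {f : N → Bool | {x | f x = true} ∈ Γ}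

/-- A family of subsets of `N`, viewed as a subset of the Cantor space `2^N`, is closed. -/
def ClosedFam {N : Type*} (Γ : Set (Set N)) : Prop :=
  IsClosed {f : N → Bool | {x | f x = true} ∈ Γ}

/-- The order `≤` between multiple gaps: an injection preserving the families
and their orthogonals. -/
def GapLE {A B ι : Type*} (Γ : ι → Set (Set A)) (Δ : ι → Set (Set B)) : Prop :=
  ∃ φ : A → B, Function.Injective φ ∧ ∀ i,
    (∀ x ∈ Γ i, φ '' x ∈ Δ i) ∧ (∀ y ∈ orthFamC (Γ i), φ '' y ∈ orthFamC (Δ i))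

/-- `X` is an `i`-chain in the `n`-adic tree: `X = {x₀,x₁,…}` with `x_k⌢i ≤ x_{k+1}`. -/
def IChain {n : ℕ} (i : Fin n) (X : Set (List (Fin n))) : Prop :=
  ∃ x : ℕ → List (Fin n), X = Set.range x ∧ ∀ k, (x k ++ [i]) <+: x (k + 1)

/-- `X` is an `[i]`-chain in the `n`-adic tree: `X = {x₀,x₁,…}` with
`x_{k+1} = x_k⌢i⌢w_k` where all entries of `w_k` are `≤ i`. -/
def BChain {n : ℕ} (i : Fin n) (X : Set (List (Fin n))) : Prop :=
  ∃ x : ℕ → List (Fin n), X = Set.range x ∧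
    ∀ k, ∃ w : List (Fin n), (∀ j ∈ w, j ≤ i) ∧ x (k + 1) = x k ++ i :: w

/-- An infinite set any two distinct members of which are related by `s⌢i ≤ t` is an `i`-chain. -/
theorem IChain.of_pairwise {n : ℕ} {i : Fin n} {X : Set (List (Fin n))} (hX : X.Infinite)
    (h : ∀ s ∈ X, ∀ t ∈ X, s ≠ t → s ++ [i] <+: t ∨ t ++ [i] <+: s) : IChain i X := by
  have hinj : InjOn List.length X := by
    intro s hs t ht hst
    by_contra hne
    rcases h s hs t ht hne with h' | h' <;>
    · have := h'.length_le
      simp at this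
      omega
  have hL : (List.length '' X).Infinite := hX.image hinj
  have hmem : ∀ k, ∃ t ∈ X, t.length = Nat.nth (· ∈ List.length '' X) k :=
    fun k => Nat.nth_mem_of_infinite hL k
  choose x hxX hxl using hmem
  refine ⟨x, ?_, fun k => ?_⟩
  · ext t
    constructor
    · intro ht
      obtain ⟨k, hk⟩ : t.length ∈ Set.range (Nat.nth (· ∈ List.length '' X)) := by
        rw [Nat.range_nth_of_infinite (p := (· ∈ List.length '' X)) hL]
        exact ⟨t, ht, rfl⟩
      exact ⟨k, hinj (hxX k) ht ((hxl k).trans hk)⟩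
    · rintro ⟨k, rfl⟩
      exact hxX k
  · have hlt : (x k).length < (x (k + 1)).length := by
      rw [hxl, hxl]
      exact Nat.nth_strictMono hL (Nat.lt_succ_self k)
    rcases h _ (hxX k) _ (hxX (k + 1)) (fun he => by rw [he] at hlt; omega) with h' | h'
    · exact h'
    · have := h'.length_le
      simp at this
      omega

theorem IChain.pairwise {n : ℕ} {i : Fin n} {X : Set (List (Fin n))} (hX : IChain i X) :
    ∀ s ∈ X, ∀ t ∈ X, s ≠ t → s ++ [i] <+: t ∨ t ++ [i] <+: s := by
  obtain ⟨x, rfl, hx⟩ := hX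
  have key : ∀ k m, x k ++ [i] <+: x (k + 1 + m) := by
    intro k m
    induction m with
    | zero => exact hx k
    | succ m ih => exact ih.trans ((List.prefix_append _ _).trans (hx _))
  rintro _ ⟨a, rfl⟩ _ ⟨b, rfl⟩ hne
  rcases lt_trichotomy a b with hab | rfl | hab
  · obtain ⟨m, rfl⟩ := Nat.exists_eq_add_of_le (Nat.succ_le_of_lt hab)
    exact Or.inl (key a m)
  · exact absurd rfl hne
  · obtain ⟨m, rfl⟩ := Nat.exists_eq_add_of_le (Nat.succ_le_of_lt hab)
    exact Or.inr (key b m)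

theorem herFam_iChain {n : ℕ} (i : Fin n) : HerFam {X | IChain i X} :=
  fun _ hX _ hYX hY => IChain.of_pairwise hY fun s hs t ht =>
    IChain.pairwise hX s (hYX hs) t (hYX ht)

theorem eq_of_concat_prefix {α : Type*} {i j : α} {s t : List α}
    (hi : s ++ [i] <+: t) (hj : s ++ [j] <+: t) : i = j := by
  have := (List.prefix_of_prefix_length_le hi hj (by simp)).eq_of_length (by simp)
  simpa using this

/-- An `i`-chain and a `j`-chain with `i ≠ j` share at most one node. -/
theorem IChain.inter_subsingleton {n : ℕ} {i j : Fin n} (hij : i ≠ j) {X Y : Set (List (Fin n))}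
    (hX : IChain i X) (hY : IChain j Y) : (X ∩ Y).Subsingleton := by
  rintro s ⟨hsX, hsY⟩ t ⟨htX, htY⟩
  by_contra hne
  rcases hX.pairwise s hsX t htX hne with h | h <;>
    rcases hY.pairwise s hsY t htY hne with h' | h'
  · exact hij (eq_of_concat_prefix h h')
  · have h₁ := h.length_le
    have h₂ := h'.length_le
    simp at h₁ h₂
    omega
  · have h₁ := h.length_le
    have h₂ := h'.length_le
    simp at h₁ h₂
    omega
  · exact hij (eq_of_concat_prefix h h')

/-- Along an increasing sequence of nodes whose union meets the entry `i` infinitely often, the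
nodes followed by `i` form an `i`-chain. -/
theorem iChain_setOf_concat_prefix {n : ℕ} (i : Fin n) {s : ℕ → List (Fin n)}
    (hs : ∀ m, s m <+: s (m + 1)) (hinf : ∀ m, ∃ t, m ≤ t.length ∧ ∃ k, t ++ [i] <+: s k) :
    IChain i {t | ∃ m, t ++ [i] <+: s m} := by
  have hmono : ∀ a b, a ≤ b → s a <+: s b := by
    intro a b hab
    induction hab with
    | refl => exact List.prefix_rfl
    | step _ ih => exact ih.trans (hs _)
  have hlt : ∀ t u : List (Fin n), ∀ v, t ++ [i] <+: v → u ++ [i] <+: v →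
      t.length < u.length → t ++ [i] <+: u := fun t u v ht hu h =>
    List.prefix_of_prefix_length_le ht ((List.prefix_append _ _).trans hu) (by simpa using h)
  refine IChain.of_pairwise (fun hfin => ?_) ?_
  · obtain ⟨b, hb⟩ := (hfin.image List.length).bddAbove
    obtain ⟨t, htl, ht⟩ := hinf (b + 1)
    have := hb ⟨t, ht, rfl⟩
    omega
  · rintro t ⟨a, ha⟩ u ⟨b, hb⟩ hne
    replace ha := ha.trans (hmono a (max a b) (le_max_left _ _))
    replace hb := hb.trans (hmono b (max a b) (le_max_right _ _))
    rcases lt_trichotomy t.length u.length with h | h | h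
    · exact Or.inl (hlt t u _ ha hb h)
    · have := (List.prefix_of_prefix_length_le ha hb (by simp [h])).eq_of_length (by simp [h])
      exact absurd (by simpa using this) hne
    · exact Or.inr (hlt u t _ hb ha h)

/-- A branch is built that takes, for each of countably many candidate tuples `c` with empty
intersection, a step `s⌢i` from a node `s ∉ c i`. -/
theorem not_cSepFam_iChain {n : ℕ} (hn : 0 < n) :
    ¬ CSepFam (fun i : Fin n => {X | IChain i X}) := by
  rintro ⟨C, hC, hsep⟩
  have hcount : (Set.univ.pi fun _ : Fin n => C).Countable := Set.countable_univ_pi fun _ => hC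
  obtain ⟨f, hf⟩ := Set.countable_iff_exists_subset_range.1 hcount
  have hstep : ∀ (m : ℕ) (s : List (Fin n)), ∃ i, (⋂ j, f m j) = ∅ → s ∉ f m i := by
    intro m s
    by_cases h : (⋂ j, f m j) = ∅
    · have hs : s ∉ ⋂ j, f m j := by simp [h]
      obtain ⟨i, hi⟩ := not_forall.1 (mt Set.mem_iInter.2 hs)
      exact ⟨i, fun _ => hi⟩
    · exact ⟨⟨0, hn⟩, fun h' => absurd h' h⟩
  choose g hg using hstep
  let s : ℕ → List (Fin n) := fun m =>
    Nat.rec [] (fun k t => t ++ [g k t] ++ List.finRange n) m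
  have hsucc : ∀ m, s (m + 1) = s m ++ [g m (s m)] ++ List.finRange n := fun _ => rfl
  have hpre : ∀ m, s m ++ [g m (s m)] <+: s (m + 1) := fun m => by
    rw [hsucc]
    exact List.prefix_append _ _
  have hlen : ∀ m, m ≤ (s m).length := by
    intro m
    induction m with
    | zero => exact Nat.zero_le _
    | succ m ih =>
      have := (hpre m).length_le
      simp at this
      omega
  have hchain : ∀ i, IChain i {t | ∃ m, t ++ [i] <+: s m} := by
    intro i
    refine iChain_setOf_concat_prefix i (fun m => (List.prefix_append _ _).trans (hpre m))
      fun m => ?_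
    obtain ⟨a, b, hab⟩ := List.append_of_mem (List.mem_finRange i)
    refine ⟨s m ++ [g m (s m)] ++ a, ?_, m + 1, b, ?_⟩
    · have := hlen m
      simp
      omega
    · rw [hsucc, hab]
      simp
  obtain ⟨c, hcC, hsub, hempty⟩ := hsep _ hchain
  obtain ⟨m, rfl⟩ := hf (show c ∈ Set.univ.pi fun _ => C from fun i _ => hcC i)
  exact hg m (s m) hempty (hsub _ ⟨m + 1, hpre m⟩)

/-- for n ≥ 2, the families 𝒮ⁿ_i of i-chains of the n-adic tree form a
strong n-gap: infinitely hereditary, pairwise orthogonal, choices have finite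
intersection, and the families are not countably separated. -/
theorem statement_4 (n : ℕ) (hn : 2 ≤ n) :
    (∀ i : Fin n, HerFam {X | IChain i X}) ∧
    (∀ i j : Fin n, i ≠ j → OrthFam {X | IChain i X} {X | IChain j X}) ∧
    (∀ x : Fin n → Set (List (Fin n)), (∀ i, IChain i (x i)) → (⋂ i, x i).Finite) ∧
    ¬ CSepFam (fun i : Fin n => {X | IChain i X}) := by
  refine ⟨herFam_iChain, fun i j hij X hX Y hY => (hX.inter_subsingleton hij hY).finite,
    fun x hx => ?_, not_cSepFam_iChain (by omega)⟩
  have h01 : (⟨0, by omega⟩ : Fin n) ≠ ⟨1, by omega⟩ := by simp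
  exact ((hx _).inter_subsingleton h01 (hx _)).finite.subset
    (Set.subset_inter (Set.iInter_subset _ _) (Set.iInter_subset _ _))
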